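/- Let φ(x) be a formula of the correspondence language with at most the free variable x. Then φ(x) is logically equivalent to the (1,1)-standard x-translation ST_11(I,x) of some modal intuitionistic formula I if and only if φ(x) is invariant with respect to (1,1)-modal asimulations. -/

import Mathlib

namespace ModalIntAsim

/-- Binary relation symbols of the correspondence vocabulary: R, R_□, R_◇. -/
inductive RelSym : Type
  | r | box | diam
deriving DecidableEq

/-- Formulas of the correspondence language: classical first-order logic without
identity, with variables indexed by `ℕ`, unary predicate letters `P n` (n : ℕ),
and the three binary relation symbols. -/
inductive FOForm : Type
  | falsum : FOForm
  | pred : ℕ → ℕ → FOForm            -- `pred n v` is `P_n(x_v)`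
  | rel : RelSym → ℕ → ℕ → FOForm    -- `rel s v w` is `S(x_v, x_w)`
  | conj : FOForm → FOForm → FOForm
  | disj : FOForm → FOForm → FOForm
  | impl : FOForm → FOForm → FOForm
  | all : ℕ → FOForm → FOForm
  | ex : ℕ → FOForm → FOForm

namespace FOForm

/-- Free variables of a correspondence formula. -/
def freeVars : FOForm → Finset ℕ
  | falsum => ∅
  | pred _ v => {v}
  | rel _ v w => {v, w}
  | conj f g => f.freeVars ∪ g.freeVars
  | disj f g => f.freeVars ∪ g.freeVars
  | impl f g => f.freeVars ∪ g.freeVars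
  | all v f => f.freeVars \ {v}
  | ex v f => f.freeVars \ {v}

/-- The unary predicate letters occurring in a formula (the binary relation
symbols R, R_□, R_◇ are regarded as belonging to every vocabulary Σ_φ). -/
def predLetters : FOForm → Finset ℕ
  | falsum => ∅
  | pred n _ => {n}
  | rel _ _ _ => ∅
  | conj f g => f.predLetters ∪ g.predLetters
  | disj f g => f.predLetters ∪ g.predLetters
  | impl f g => f.predLetters ∪ g.predLetters
  | all _ f => f.predLetters
  | ex _ f => f.predLetters

/-- Degree of a formula: the greatest number of nested quantifiers. -/
def degree : FOForm → ℕ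
  | falsum => 0
  | pred _ _ => 0
  | rel _ _ _ => 0
  | conj f g => max f.degree g.degree
  | disj f g => max f.degree g.degree
  | impl f g => max f.degree g.degree
  | all _ f => f.degree + 1
  | ex _ f => f.degree + 1

end FOForm

/-- A model of the correspondence language: a domain together with
interpretations of R, R_□, R_◇ and of the unary predicate letters.
(A Θ-model only consults the letters in Θ.) -/
structure Model : Type 1 where
  U : Type
  rel : U → U → Prop
  relBox : U → U → Prop
  relDiam : U → U → Prop
  pred : ℕ → U → Prop

/-- Interpretation of a binary relation symbol in a model. -/
def Model.relOf (M : Model) : RelSym → M.U → M.U → Prop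
  | .r => M.rel
  | .box => M.relBox
  | .diam => M.relDiam

/-- Tarskian satisfaction of a formula in a model under an assignment. -/
def Sat (M : Model) : FOForm → (ℕ → M.U) → Prop
  | .falsum, _ => False
  | .pred n v, α => M.pred n (α v)
  | .rel s v w, α => M.relOf s (α v) (α w)
  | .conj f g, α => Sat M f α ∧ Sat M g α
  | .disj f g, α => Sat M f α ∨ Sat M g α
  | .impl f g, α => Sat M f α → Sat M g α
  | .all v f, α => ∀ u : M.U, Sat M f (Function.update α v u)
  | .ex v f, α => ∃ u : M.U, Sat M f (Function.update α v u)

/-- `M, a ⊨ φ(x)`: φ is true in `M` under any assignment sending `x` to `a`. -/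
def SatAt (M : Model) (a : M.U) (x : ℕ) (φ : FOForm) : Prop :=
  ∀ α : ℕ → M.U, α x = a → Sat M φ α

/-- Logical equivalence of correspondence formulas. -/
def Equiv (φ ψ : FOForm) : Prop :=
  ∀ (M : Model) (α : ℕ → M.U), Sat M φ α ↔ Sat M ψ α

/-- Logical entailment between correspondence formulas. -/
def Entails (φ ψ : FOForm) : Prop :=
  ∀ (M : Model) (α : ℕ → M.U), Sat M φ α → Sat M ψ α

/-- Modal intuitionistic formulas: built from propositional letters `p n`
using ⊥, ∧, ∨, →, □, ◇. -/
inductive MForm : Type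
  | bot : MForm
  | prop : ℕ → MForm
  | conj : MForm → MForm → MForm
  | disj : MForm → MForm → MForm
  | impl : MForm → MForm → MForm
  | box : MForm → MForm
  | diam : MForm → MForm

/-- The (i,j)-standard x-translation `ST_ij`.  `boxOne = true` means the box
clause (□₁) is used (i = 1), `boxOne = false` means (□₂) (i = 2); likewise
`diamOne = true` means the diamond clause (◇₁) (j = 1) and `diamOne = false`
means (◇₂) (j = 2).  Bound variables are chosen fresh as `x+1`, `x+2`. -/
def ST (boxOne diamOne : Bool) : MForm → ℕ → FOForm
  | .bot, _ => .falsum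
  | .prop n, x => .pred n x
  | .conj I J, x => .conj (ST boxOne diamOne I x) (ST boxOne diamOne J x)
  | .disj I J, x => .disj (ST boxOne diamOne I x) (ST boxOne diamOne J x)
  | .impl I J, x =>
      .all (x + 1) (.impl (.rel .r x (x + 1))
        (.impl (ST boxOne diamOne I (x + 1)) (ST boxOne diamOne J (x + 1))))
  | .box I, x =>
      if boxOne then
        .all (x + 1) (.impl (.rel .box x (x + 1)) (ST boxOne diamOne I (x + 1)))
      else
        .all (x + 1) (.impl (.rel .r x (x + 1))
          (.all (x + 2) (.impl (.rel .box (x + 1) (x + 2)) (ST boxOne diamOne I (x + 2)))))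
  | .diam I, x =>
      if diamOne then
        .ex (x + 1) (.conj (.rel .diam x (x + 1)) (ST boxOne diamOne I (x + 1)))
      else
        .all (x + 1) (.impl (.rel .r x (x + 1))
          (.ex (x + 2) (.conj (.rel .diam (x + 1) (x + 2)) (ST boxOne diamOne I (x + 2)))))

/-! ### Conditions on relations between tuples (the k-asimulation conditions).
A relation between the two models is represented by its two directed
components; `N` is the model of the source tuple and `P` that of the target
tuple.  A tuple `(ā_m, a)` is represented as the list `as ++ [a]`, with
`m = as.length`. -/

section TupleConds

variable (N P : Model)

/-- The "p-type" condition: related tuples are nonempty and of equal length. -/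
def TypeCond (A : List N.U → List P.U → Prop) : Prop :=
  ∀ as bs, A as bs → as ≠ [] ∧ as.length = bs.length

/-- (p-base). -/
def BaseCond (Θ : Set ℕ) (A : List N.U → List P.U → Prop) : Prop :=
  ∀ (as : List N.U) (bs : List P.U) (a : N.U) (b : P.U),
    A (as ++ [a]) (bs ++ [b]) → ∀ n ∈ Θ, N.pred n a → P.pred n b

/-- (p-step). -/
def StepCond (k : ℕ) (A : List N.U → List P.U → Prop)
    (Arev : List P.U → List N.U → Prop) : Prop :=
  ∀ (as : List N.U) (bs : List P.U) (a : N.U) (b d : P.U),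
    A (as ++ [a]) (bs ++ [b]) → P.rel b d → as.length < k →
    ∃ c : N.U, N.rel a c ∧ A (as ++ [a, c]) (bs ++ [b, d]) ∧
      Arev (bs ++ [b, d]) (as ++ [a, c])

/-- (p-box-1). -/
def Box1Cond (k : ℕ) (A : List N.U → List P.U → Prop) : Prop :=
  ∀ (as : List N.U) (bs : List P.U) (a : N.U) (b d : P.U),
    A (as ++ [a]) (bs ++ [b]) → P.relBox b d → as.length < k →
    ∃ c : N.U, N.relBox a c ∧ A (as ++ [a, c]) (bs ++ [b, d])

/-- (p-box-2). -/
def Box2Cond (k : ℕ) (A : List N.U → List P.U → Prop) : Prop :=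
  ∀ (as : List N.U) (bs : List P.U) (a : N.U) (b d f : P.U),
    A (as ++ [a]) (bs ++ [b]) → P.rel b d → P.relBox d f → as.length + 1 < k →
    ∃ c e : N.U, N.rel a c ∧ N.relBox c e ∧ A (as ++ [a, c, e]) (bs ++ [b, d, f])

/-- (p-diam-1). -/
def Diam1Cond (k : ℕ) (A : List N.U → List P.U → Prop) : Prop :=
  ∀ (as : List N.U) (bs : List P.U) (a c : N.U) (b : P.U),
    A (as ++ [a]) (bs ++ [b]) → N.relDiam a c → as.length < k →
    ∃ d : P.U, P.relDiam b d ∧ A (as ++ [a, c]) (bs ++ [b, d])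

/-- (p-diam-2(1)). -/
def Diam2aCond (k : ℕ) (A B : List N.U → List P.U → Prop) : Prop :=
  ∀ (as : List N.U) (bs : List P.U) (a : N.U) (b d : P.U),
    A (as ++ [a]) (bs ++ [b]) → P.rel b d → as.length + 1 < k →
    ∃ c : N.U, N.rel a c ∧ B (as ++ [a, c]) (bs ++ [b, d])

/-- (p-diam-2(2)). -/
def Diam2bCond (k : ℕ) (B A : List N.U → List P.U → Prop) : Prop :=
  ∀ (as : List N.U) (bs : List P.U) (a c : N.U) (b : P.U),
    B (as ++ [a]) (bs ++ [b]) → N.relDiam a c → as.length < k →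
    ∃ d : P.U, P.relDiam b d ∧ A (as ++ [a, c]) (bs ++ [b, d])

end TupleConds

/-- An (i,1)-modal ⟨(M₁,t),(M₂,u)⟩_k-asimulation (j = 1): a single relation `A`
given by its two directed components `A12`, `A21`. -/
def IsKAsimD1 (boxOne : Bool) (Θ : Set ℕ) (M₁ M₂ : Model) (t : M₁.U) (u : M₂.U) (k : ℕ)
    (A12 : List M₁.U → List M₂.U → Prop) (A21 : List M₂.U → List M₁.U → Prop) : Prop :=
  TypeCond M₁ M₂ A12 ∧ TypeCond M₂ M₁ A21 ∧
  A12 [t] [u] ∧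
  BaseCond M₁ M₂ Θ A12 ∧ BaseCond M₂ M₁ Θ A21 ∧
  StepCond M₁ M₂ k A12 A21 ∧ StepCond M₂ M₁ k A21 A12 ∧
  (if boxOne then Box1Cond M₁ M₂ k A12 ∧ Box1Cond M₂ M₁ k A21
   else Box2Cond M₁ M₂ k A12 ∧ Box2Cond M₂ M₁ k A21) ∧
  Diam1Cond M₁ M₂ k A12 ∧ Diam1Cond M₂ M₁ k A21

/-- An (i,2)-modal ⟨(M₁,t),(M₂,u)⟩_k-asimulation (j = 2): an ordered pair
(A, B) of relations, each given by its two directed components. -/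
def IsKAsimD2 (boxOne : Bool) (Θ : Set ℕ) (M₁ M₂ : Model) (t : M₁.U) (u : M₂.U) (k : ℕ)
    (A12 : List M₁.U → List M₂.U → Prop) (A21 : List M₂.U → List M₁.U → Prop)
    (B12 : List M₁.U → List M₂.U → Prop) (B21 : List M₂.U → List M₁.U → Prop) : Prop :=
  TypeCond M₁ M₂ A12 ∧ TypeCond M₂ M₁ A21 ∧
  TypeCond M₁ M₂ B12 ∧ TypeCond M₂ M₁ B21 ∧
  A12 [t] [u] ∧
  BaseCond M₁ M₂ Θ A12 ∧ BaseCond M₂ M₁ Θ A21 ∧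
  StepCond M₁ M₂ k A12 A21 ∧ StepCond M₂ M₁ k A21 A12 ∧
  (if boxOne then Box1Cond M₁ M₂ k A12 ∧ Box1Cond M₂ M₁ k A21
   else Box2Cond M₁ M₂ k A12 ∧ Box2Cond M₂ M₁ k A21) ∧
  Diam2aCond M₁ M₂ k A12 B12 ∧ Diam2aCond M₂ M₁ k A21 B21 ∧
  Diam2bCond M₁ M₂ k B12 A12 ∧ Diam2bCond M₂ M₁ k B21 A21

/-- φ(x) is invariant with respect to (i,1)-modal k-asimulations. -/
def KInvariantD1 (boxOne : Bool) (x : ℕ) (φ : FOForm) (k : ℕ) : Prop :=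
  ∀ Θ : Set ℕ, (φ.predLetters : Set ℕ) ⊆ Θ →
  ∀ (M₁ M₂ : Model) (t : M₁.U) (u : M₂.U)
    (A12 : List M₁.U → List M₂.U → Prop) (A21 : List M₂.U → List M₁.U → Prop),
    IsKAsimD1 boxOne Θ M₁ M₂ t u k A12 A21 →
    ∀ (a : M₁.U) (b : M₂.U), A12 [a] [b] → SatAt M₁ a x φ → SatAt M₂ b x φ

/-- φ(x) is invariant with respect to (i,2)-modal k-asimulations. -/
def KInvariantD2 (boxOne : Bool) (x : ℕ) (φ : FOForm) (k : ℕ) : Prop :=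
  ∀ Θ : Set ℕ, (φ.predLetters : Set ℕ) ⊆ Θ →
  ∀ (M₁ M₂ : Model) (t : M₁.U) (u : M₂.U)
    (A12 : List M₁.U → List M₂.U → Prop) (A21 : List M₂.U → List M₁.U → Prop)
    (B12 : List M₁.U → List M₂.U → Prop) (B21 : List M₂.U → List M₁.U → Prop),
    IsKAsimD2 boxOne Θ M₁ M₂ t u k A12 A21 B12 B21 →
    ∀ (a : M₁.U) (b : M₂.U), A12 [a] [b] → SatAt M₁ a x φ → SatAt M₂ b x φ

/-! ### Conditions for asimulations *simpliciter* (relations between elements). -/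

section ElemConds

variable (N P : Model)

/-- (base). -/
def BaseCondE (Θ : Set ℕ) (A : N.U → P.U → Prop) : Prop :=
  ∀ (a : N.U) (b : P.U), A a b → ∀ n ∈ Θ, N.pred n a → P.pred n b

/-- (step). -/
def StepCondE (A : N.U → P.U → Prop) (Arev : P.U → N.U → Prop) : Prop :=
  ∀ (a : N.U) (b d : P.U), A a b → P.rel b d →
    ∃ c : N.U, N.rel a c ∧ A c d ∧ Arev d c

/-- (box-1). -/
def Box1CondE (A : N.U → P.U → Prop) : Prop :=
  ∀ (a : N.U) (b d : P.U), A a b → P.relBox b d →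
    ∃ c : N.U, N.relBox a c ∧ A c d

/-- (box-2). -/
def Box2CondE (A : N.U → P.U → Prop) : Prop :=
  ∀ (a : N.U) (b d f : P.U), A a b → P.rel b d → P.relBox d f →
    ∃ c e : N.U, N.rel a c ∧ N.relBox c e ∧ A e f

/-- (diam-1). -/
def Diam1CondE (A : N.U → P.U → Prop) : Prop :=
  ∀ (a c : N.U) (b : P.U), A a b → N.relDiam a c →
    ∃ d : P.U, P.relDiam b d ∧ A c d

/-- (diam-2(1)). -/
def Diam2aCondE (A B : N.U → P.U → Prop) : Prop :=
  ∀ (a : N.U) (b d : P.U), A a b → P.rel b d →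
    ∃ c : N.U, N.rel a c ∧ B c d

/-- (diam-2(2)). -/
def Diam2bCondE (B A : N.U → P.U → Prop) : Prop :=
  ∀ (a c : N.U) (b : P.U), B a b → N.relDiam a c →
    ∃ d : P.U, P.relDiam b d ∧ A c d

end ElemConds

/-- An (i,1)-modal ⟨(M₁,t),(M₂,u)⟩-asimulation (j = 1). -/
def IsAsimD1 (boxOne : Bool) (Θ : Set ℕ) (M₁ M₂ : Model) (t : M₁.U) (u : M₂.U)
    (A12 : M₁.U → M₂.U → Prop) (A21 : M₂.U → M₁.U → Prop) : Prop :=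
  A12 t u ∧
  BaseCondE M₁ M₂ Θ A12 ∧ BaseCondE M₂ M₁ Θ A21 ∧
  StepCondE M₁ M₂ A12 A21 ∧ StepCondE M₂ M₁ A21 A12 ∧
  (if boxOne then Box1CondE M₁ M₂ A12 ∧ Box1CondE M₂ M₁ A21
   else Box2CondE M₁ M₂ A12 ∧ Box2CondE M₂ M₁ A21) ∧
  Diam1CondE M₁ M₂ A12 ∧ Diam1CondE M₂ M₁ A21

/-- An (i,2)-modal ⟨(M₁,t),(M₂,u)⟩-asimulation (j = 2). -/
def IsAsimD2 (boxOne : Bool) (Θ : Set ℕ) (M₁ M₂ : Model) (t : M₁.U) (u : M₂.U)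
    (A12 : M₁.U → M₂.U → Prop) (A21 : M₂.U → M₁.U → Prop)
    (B12 : M₁.U → M₂.U → Prop) (B21 : M₂.U → M₁.U → Prop) : Prop :=
  A12 t u ∧
  BaseCondE M₁ M₂ Θ A12 ∧ BaseCondE M₂ M₁ Θ A21 ∧
  StepCondE M₁ M₂ A12 A21 ∧ StepCondE M₂ M₁ A21 A12 ∧
  (if boxOne then Box1CondE M₁ M₂ A12 ∧ Box1CondE M₂ M₁ A21
   else Box2CondE M₁ M₂ A12 ∧ Box2CondE M₂ M₁ A21) ∧
  Diam2aCondE M₁ M₂ A12 B12 ∧ Diam2aCondE M₂ M₁ A21 B21 ∧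
  Diam2bCondE M₁ M₂ B12 A12 ∧ Diam2bCondE M₂ M₁ B21 A21

/-- φ(x) is invariant with respect to (i,1)-modal asimulations. -/
def InvariantD1 (boxOne : Bool) (x : ℕ) (φ : FOForm) : Prop :=
  ∀ Θ : Set ℕ, (φ.predLetters : Set ℕ) ⊆ Θ →
  ∀ (M₁ M₂ : Model) (t : M₁.U) (u : M₂.U)
    (A12 : M₁.U → M₂.U → Prop) (A21 : M₂.U → M₁.U → Prop),
    IsAsimD1 boxOne Θ M₁ M₂ t u A12 A21 →
    ∀ (a : M₁.U) (b : M₂.U), A12 a b → SatAt M₁ a x φ → SatAt M₂ b x φ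

/-- φ(x) is invariant with respect to (i,2)-modal asimulations. -/
def InvariantD2 (boxOne : Bool) (x : ℕ) (φ : FOForm) : Prop :=
  ∀ Θ : Set ℕ, (φ.predLetters : Set ℕ) ⊆ Θ →
  ∀ (M₁ M₂ : Model) (t : M₁.U) (u : M₂.U)
    (A12 : M₁.U → M₂.U → Prop) (A21 : M₂.U → M₁.U → Prop)
    (B12 : M₁.U → M₂.U → Prop) (B21 : M₂.U → M₁.U → Prop),
    IsAsimD2 boxOne Θ M₁ M₂ t u A12 A21 B12 B21 →
    ∀ (a : M₁.U) (b : M₂.U), A12 a b → SatAt M₁ a x φ → SatAt M₂ b x φ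

/-! ### Types, complete conjunctions, ω-saturation. -/

/-- `int(φ,x,l)`: the set of (2,2)-standard x-translations of modal
intuitionistic formulas which are (Σ_φ,x,l)-formulas. -/
def intSet (φ : FOForm) (x l : ℕ) : Set FOForm :=
  {ψ | (∃ I : MForm, ψ = ST false false I x) ∧
    ψ.predLetters ⊆ φ.predLetters ∧ ψ.freeVars ⊆ {x} ∧ ψ.degree ≤ l}

/-- `tp_l(φ(x),M,a)`. -/
def tpSet (φ : FOForm) (x l : ℕ) (M : Model) (a : M.U) : Set FOForm :=
  {ψ | ψ ∈ intSet φ x l ∧ SatAt M a x ψ}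

/-- Conjunction of a nonempty list of formulas. -/
def listConj : FOForm → List FOForm → FOForm
  | ψ, [] => ψ
  | ψ, χ :: L => FOForm.conj ψ (listConj χ L)

/-- Ψ(x) is a complete (φ,x,k)-conjunction. -/
def IsCompleteConj (φ : FOForm) (x k : ℕ) (Ψ : FOForm) : Prop :=
  (∃ (ψ₀ : FOForm) (L : List FOForm), ψ₀ ∈ intSet φ x k ∧
    (∀ χ ∈ L, χ ∈ intSet φ x k) ∧ Ψ = listConj ψ₀ L) ∧
  ∃ (M : Model) (a : M.U), SatAt M a x (FOForm.conj Ψ φ) ∧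
    ∀ ψ ∈ tpSet φ x k M a, Entails Ψ ψ

/-- `int_x(Θ)` for the (i,j)-standard translation. -/
def intX (Θ : Set ℕ) (boxOne diamOne : Bool) (x : ℕ) : Set FOForm :=
  {ψ | (∃ I : MForm, ψ = ST boxOne diamOne I x) ∧ (ψ.predLetters : Set ℕ) ⊆ Θ}

/-- `tp_x(M,t)` for the (i,j)-standard translation. -/
def tpX (Θ : Set ℕ) (boxOne diamOne : Bool) (x : ℕ) (M : Model) (t : M.U) : Set FOForm :=
  {ψ | ψ ∈ intX Θ boxOne diamOne x ∧ SatAt M t x ψ}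

/-- `imp_x(M,t) = ⋂ { t̄p_x(M,u) : t R_◇ u }` (for the (2,2)-translation). -/
def impX (Θ : Set ℕ) (x : ℕ) (M : Model) (t : M.U) : Set FOForm :=
  {ψ | ψ ∈ intX Θ false false x ∧ ∀ u : M.U, M.relDiam t u → ¬ SatAt M u x ψ}

/-- ω-saturation: for every finite tuple of parameters (the first `n` values of
an assignment `α`) and every set `Γ` of formulas with finitely many free
variables beyond the parameters, if `Γ` is consistent with the first-order
theory of `[M,ā]` (i.e. satisfiable together with it in some model), then `Γ`
is realized in `[M,ā]`. -/
def OmegaSaturated (M : Model) : Prop :=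
  ∀ (n : ℕ) (α : ℕ → M.U) (Γ : Set FOForm),
    (∃ k : ℕ, ∀ γ ∈ Γ, γ.freeVars ⊆ Finset.range (n + k)) →
    (∃ (N : Model) (β : ℕ → N.U),
      (∀ ψ : FOForm, ψ.freeVars ⊆ Finset.range n → Sat M ψ α → Sat N ψ β) ∧
      ∀ γ ∈ Γ, Sat N γ β) →
    ∃ α' : ℕ → M.U, (∀ i < n, α' i = α i) ∧ ∀ γ ∈ Γ, Sat M γ α'

/-! ### Relativization to a class κ of models. -/

/-- κ(Θ) is first-order axiomatizable for every finite Θ (with R ∈ Θ): for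
every finite set `S` of unary predicate letters there is a set of Θ-sentences
axiomatizing membership in κ. -/
def FinAxiomatizable (κ : Set Model) : Prop :=
  ∀ S : Finset ℕ, ∃ Ax : Set FOForm,
    (∀ ψ ∈ Ax, ψ.freeVars = ∅ ∧ (ψ.predLetters : Set ℕ) ⊆ (S : Set ℕ)) ∧
    ∀ M : Model, M ∈ κ ↔ ∀ ψ ∈ Ax, ∀ α : ℕ → M.U, Sat M ψ α

/-- φ κ-follows from ψ: {ψ, ¬φ} is not κ-satisfiable. -/
def KappaFollows (κ : Set Model) (ψ φ : FOForm) : Prop :=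
  ¬ ∃ M : Model, M ∈ κ ∧ ∃ α : ℕ → M.U, Sat M ψ α ∧ ¬ Sat M φ α

/-- κ-equivalence of formulas. -/
def KappaEquiv (κ : Set Model) (φ ψ : FOForm) : Prop :=
  KappaFollows κ φ ψ ∧ KappaFollows κ ψ φ

/-- φ(x) is κ-invariant with respect to (i,1)-modal asimulations. -/
def KappaInvariantD1 (κ : Set Model) (boxOne : Bool) (x : ℕ) (φ : FOForm) : Prop :=
  ∀ Θ : Set ℕ, (φ.predLetters : Set ℕ) ⊆ Θ →
  ∀ (M₁ M₂ : Model), M₁ ∈ κ → M₂ ∈ κ →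
  ∀ (t : M₁.U) (u : M₂.U)
    (A12 : M₁.U → M₂.U → Prop) (A21 : M₂.U → M₁.U → Prop),
    IsAsimD1 boxOne Θ M₁ M₂ t u A12 A21 →
    ∀ (a : M₁.U) (b : M₂.U), A12 a b → SatAt M₁ a x φ → SatAt M₂ b x φ

/-- φ(x) is κ-invariant with respect to (i,2)-modal asimulations. -/
def KappaInvariantD2 (κ : Set Model) (boxOne : Bool) (x : ℕ) (φ : FOForm) : Prop :=
  ∀ Θ : Set ℕ, (φ.predLetters : Set ℕ) ⊆ Θ →
  ∀ (M₁ M₂ : Model), M₁ ∈ κ → M₂ ∈ κ →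
  ∀ (t : M₁.U) (u : M₂.U)
    (A12 : M₁.U → M₂.U → Prop) (A21 : M₂.U → M₁.U → Prop)
    (B12 : M₁.U → M₂.U → Prop) (B21 : M₂.U → M₁.U → Prop),
    IsAsimD2 boxOne Θ M₁ M₂ t u A12 A21 B12 B21 →
    ∀ (a : M₁.U) (b : M₂.U), A12 a b → SatAt M₁ a x φ → SatAt M₂ b x φ

/-- φ(x) is κ-invariant with respect to (i,j)-modal asimulations
(`diamOne = true` means j = 1). -/
def KappaInvariant (κ : Set Model) (boxOne diamOne : Bool) (x : ℕ) (φ : FOForm) : Prop :=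
  if diamOne then KappaInvariantD1 κ boxOne x φ else KappaInvariantD2 κ boxOne x φ



/-- Kripke-style satisfaction corresponding to the (1,1)-translation. -/
def MSat (M : Model) : MForm → M.U → Prop
  | .bot, _ => False
  | .prop n, a => M.pred n a
  | .conj I J, a => MSat M I a ∧ MSat M J a
  | .disj I J, a => MSat M I a ∨ MSat M J a
  | .impl I J, a => ∀ c, M.rel a c → MSat M I c → MSat M J c
  | .box I, a => ∀ c, M.relBox a c → MSat M I c
  | .diam I, a => ∃ c, M.relDiam a c ∧ MSat M I c

theorem sat_ST (M : Model) (I : MForm) :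
    ∀ (x : ℕ) (α : ℕ → M.U), Sat M (ST true true I x) α ↔ MSat M I (α x) := by
  induction I with
  | bot => intro x α; rfl
  | prop n => intro x α; rfl
  | conj I J ihI ihJ => intro x α; simp [ST, Sat, MSat, ihI, ihJ]
  | disj I J ihI ihJ => intro x α; simp [ST, Sat, MSat, ihI, ihJ]
  | impl I J ihI ihJ => intro x α; simp [ST, Sat, MSat, ihI, ihJ, Model.relOf]
  | box I ih => intro x α; simp [ST, Sat, MSat, ih, Model.relOf]
  | diam I ih => intro x α; simp [ST, Sat, MSat, ih, Model.relOf]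

theorem sat_congr (M : Model) (φ : FOForm) :
    ∀ (α β : ℕ → M.U), (∀ v ∈ φ.freeVars, α v = β v) → (Sat M φ α ↔ Sat M φ β) := by
  induction φ with
  | falsum => intro α β h; rfl
  | pred n v => intro α β h; simp only [Sat]; rw [h v (by simp [FOForm.freeVars])]
  | rel s v w =>
    intro α β h; simp only [Sat]
    rw [h v (by simp [FOForm.freeVars]), h w (by simp [FOForm.freeVars])]
  | conj f g ihf ihg =>
    intro α β h; simp only [Sat]
    rw [ihf α β fun v hv => h v (by simp [FOForm.freeVars, hv]),
      ihg α β fun v hv => h v (by simp [FOForm.freeVars, hv])]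
  | disj f g ihf ihg =>
    intro α β h; simp only [Sat]
    rw [ihf α β fun v hv => h v (by simp [FOForm.freeVars, hv]),
      ihg α β fun v hv => h v (by simp [FOForm.freeVars, hv])]
  | impl f g ihf ihg =>
    intro α β h; simp only [Sat]
    rw [ihf α β fun v hv => h v (by simp [FOForm.freeVars, hv]),
      ihg α β fun v hv => h v (by simp [FOForm.freeVars, hv])]
  | all v f ih =>
    intro α β h; simp only [Sat]
    refine forall_congr' fun u => ih _ _ fun w hw => ?_
    by_cases hwv : w = v
    · subst hwv; simp
    · simp [hwv, h w (by simp [FOForm.freeVars, hw, hwv])]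
  | ex v f ih =>
    intro α β h; simp only [Sat]
    refine exists_congr fun u => ih _ _ fun w hw => ?_
    by_cases hwv : w = v
    · subst hwv; simp
    · simp [hwv, h w (by simp [FOForm.freeVars, hw, hwv])]

theorem satAt_iff (M : Model) (a : M.U) (x : ℕ) (φ : FOForm) (hfv : φ.freeVars ⊆ {x})
    (α : ℕ → M.U) (hα : α x = a) : SatAt M a x φ ↔ Sat M φ α := by
  refine ⟨fun h => h α hα, fun h β hβ => (sat_congr M φ β α ?_).2 h⟩
  intro v hv
  have : v = x := by simpa using hfv hv
  rw [this, hα, hβ]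

/-- Make all predicate letters outside `Θ` empty. -/
abbrev restr (Θ : Set ℕ) (M : Model) : Model where
  U := M.U
  rel := M.rel
  relBox := M.relBox
  relDiam := M.relDiam
  pred n a := n ∈ Θ ∧ M.pred n a

theorem sat_restr (Θ : Set ℕ) (M : Model) (φ : FOForm) (h : (φ.predLetters : Set ℕ) ⊆ Θ) :
    ∀ α : ℕ → M.U, Sat (restr Θ M) φ α ↔ Sat M φ α := by
  induction φ with
  | falsum => intro α; rfl
  | pred n v =>
    intro α
    have : n ∈ Θ := h (by simp [FOForm.predLetters])
    simp [Sat, restr, this]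
  | rel s v w => intro α; cases s <;> rfl
  | conj f g ihf ihg =>
    simp only [FOForm.predLetters, Finset.coe_union, Set.union_subset_iff] at h
    intro α; simp only [Sat]; exact and_congr (ihf h.1 α) (ihg h.2 α)
  | disj f g ihf ihg =>
    simp only [FOForm.predLetters, Finset.coe_union, Set.union_subset_iff] at h
    intro α; simp only [Sat]; exact or_congr (ihf h.1 α) (ihg h.2 α)
  | impl f g ihf ihg =>
    simp only [FOForm.predLetters, Finset.coe_union, Set.union_subset_iff] at h
    intro α; simp only [Sat]; exact imp_congr (ihf h.1 α) (ihg h.2 α)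
  | all v f ih => intro α; exact forall_congr' fun u => ih h _
  | ex v f ih => intro α; exact exists_congr fun u => ih h _

theorem asim_preserves (M N : Model) (A : M.U → N.U → Prop) (B : N.U → M.U → Prop)
    (b1 : BaseCondE M N Set.univ A) (b2 : BaseCondE N M Set.univ B)
    (s1 : StepCondE M N A B) (s2 : StepCondE N M B A)
    (x1 : Box1CondE M N A) (x2 : Box1CondE N M B)
    (d1 : Diam1CondE M N A) (d2 : Diam1CondE N M B) (I : MForm) :
    (∀ a b, A a b → MSat M I a → MSat N I b) ∧ (∀ b a, B b a → MSat N I b → MSat M I a) := by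
  induction I with
  | bot => exact ⟨fun _ _ _ h => h, fun _ _ _ h => h⟩
  | prop n => exact ⟨fun a b h => b1 a b h n trivial, fun a b h => b2 a b h n trivial⟩
  | conj I J ihI ihJ =>
    exact ⟨fun a b h => And.imp (ihI.1 a b h) (ihJ.1 a b h),
      fun a b h => And.imp (ihI.2 a b h) (ihJ.2 a b h)⟩
  | disj I J ihI ihJ =>
    exact ⟨fun a b h => Or.imp (ihI.1 a b h) (ihJ.1 a b h),
      fun a b h => Or.imp (ihI.2 a b h) (ihJ.2 a b h)⟩
  | impl I J ihI ihJ =>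
    constructor
    · intro a b h hI d hd hId
      obtain ⟨c, hc, hcd, hdc⟩ := s1 a b d h hd
      exact ihJ.1 _ _ hcd (hI c hc (ihI.2 _ _ hdc hId))
    · intro a b h hI d hd hId
      obtain ⟨c, hc, hcd, hdc⟩ := s2 a b d h hd
      exact ihJ.2 _ _ hcd (hI c hc (ihI.1 _ _ hdc hId))
  | box I ih =>
    constructor
    · intro a b h hI d hd
      obtain ⟨c, hc, hcd⟩ := x1 a b d h hd
      exact ih.1 _ _ hcd (hI c hc)
    · intro a b h hI d hd
      obtain ⟨c, hc, hcd⟩ := x2 a b d h hd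
      exact ih.2 _ _ hcd (hI c hc)
  | diam I ih =>
    constructor
    · rintro a b h ⟨c, hc, hIc⟩
      obtain ⟨d, hd, hcd⟩ := d1 a c b h hc
      exact ⟨d, hd, ih.1 _ _ hcd hIc⟩
    · rintro a b h ⟨c, hc, hIc⟩
      obtain ⟨d, hd, hcd⟩ := d2 a c b h hc
      exact ⟨d, hd, ih.2 _ _ hcd hIc⟩

theorem forward_dir (x : ℕ) (φ : FOForm) (I : MForm)
    (h : Equiv φ (ST true true I x)) : InvariantD1 true x φ := by
  intro Θ hΘ M N t u A B hA a b hab hs β hβ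
  obtain ⟨-, b1, b2, s1, s2, ⟨x1, x2⟩, d1, d2⟩ := hA
  have key := (asim_preserves (restr Θ M) (restr Θ N) A B
    (fun a b h n _ hn => ⟨hn.1, b1 a b h n hn.1 hn.2⟩)
    (fun a b h n _ hn => ⟨hn.1, b2 a b h n hn.1 hn.2⟩) s1 s2 x1 x2 d1 d2 I).1 a b hab
  have h1 : Sat (restr Θ M) φ (fun _ => a) := (sat_restr Θ M φ hΘ _).2 (hs _ rfl)
  rw [h, sat_ST] at h1
  have h2 := key h1
  rw [← sat_restr Θ N φ hΘ, h, sat_ST, hβ]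
  exact h2

/-! Ultraproducts over `ℕ` (no quotient is needed, as there is no identity). -/

noncomputable def uf : Ultrafilter ℕ := Filter.hyperfilter ℕ

abbrev ultra (M : ℕ → Model) : Model where
  U := ∀ n, (M n).U
  rel a b := ∀ᶠ n in (uf : Filter ℕ), (M n).rel (a n) (b n)
  relBox a b := ∀ᶠ n in (uf : Filter ℕ), (M n).relBox (a n) (b n)
  relDiam a b := ∀ᶠ n in (uf : Filter ℕ), (M n).relDiam (a n) (b n)
  pred k a := ∀ᶠ n in (uf : Filter ℕ), (M n).pred k (a n)

theorem ultra_relOf (M : ℕ → Model) (s : RelSym) (a b : (ultra M).U) :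
    (ultra M).relOf s a b ↔ ∀ᶠ n in (uf : Filter ℕ), (M n).relOf s (a n) (b n) := by
  cases s <;> rfl

theorem eventually_exists (M : ℕ → Model) (a₀ : ∀ n, (M n).U) (P : ∀ n, (M n).U → Prop) :
    (∃ u : ∀ n, (M n).U, ∀ᶠ n in (uf : Filter ℕ), P n (u n)) ↔
      ∀ᶠ n in (uf : Filter ℕ), ∃ u, P n u := by
  classical
  constructor
  · rintro ⟨u, hu⟩
    exact hu.mono fun n hn => ⟨_, hn⟩
  · intro h
    refine ⟨fun n => if h : ∃ u, P n u then h.choose else a₀ n, h.mono fun n hn => ?_⟩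
    simp only [hn, dif_pos]
    exact hn.choose_spec

theorem los (M : ℕ → Model) (φ : FOForm) :
    ∀ α : ℕ → (ultra M).U, Sat (ultra M) φ α ↔
      ∀ᶠ n in (uf : Filter ℕ), Sat (M n) φ (fun v => α v n) := by
  have upd : ∀ (α : ℕ → (ultra M).U) (v : ℕ) (u : (ultra M).U) (n : ℕ),
      (fun w => Function.update α v u w n) = Function.update (fun w => α w n) v (u n) := by
    intro α v u n
    funext w
    by_cases h : w = v
    · subst h; simp
    · simp [h]
  induction φ with
  | falsum =>
    intro α
    simp only [Sat, Filter.eventually_false_iff_eq_bot, false_iff]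
    exact uf.neBot.ne
  | pred n v => intro α; rfl
  | rel s v w => intro α; exact ultra_relOf M s _ _
  | conj f g ihf ihg =>
    intro α; simp only [Sat, ihf, ihg]; exact Filter.eventually_and.symm
  | disj f g ihf ihg =>
    intro α; simp only [Sat, ihf, ihg]; exact Ultrafilter.eventually_or.symm
  | impl f g ihf ihg =>
    intro α; simp only [Sat, ihf, ihg]; exact Ultrafilter.eventually_imp.symm
  | all v f ih =>
    intro α
    simp only [Sat, ih, upd]
    have := eventually_exists M (α 0)
      (fun n u => ¬ Sat (M n) f (Function.update (fun w => α w n) v u))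
    simp only [Ultrafilter.eventually_not, ← not_forall] at this
    exact not_iff_not.1 this
  | ex v f ih =>
    intro α
    simp only [Sat, ih, upd]
    exact eventually_exists M (α 0)
      (fun n u => Sat (M n) f (Function.update (fun w => α w n) v u))

theorem los_M (M : ℕ → Model) (I : MForm) (a : (ultra M).U) :
    MSat (ultra M) I a ↔ ∀ᶠ n in (uf : Filter ℕ), MSat (M n) I (a n) := by
  have := los M (ST true true I 0) (fun _ => a)
  simpa only [sat_ST] using this

theorem uf_ge (k : ℕ) : ∀ᶠ n in (uf : Filter ℕ), k ≤ n := by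
  have : ∀ᶠ n in Filter.atTop, k ≤ n := Filter.eventually_ge_atTop k
  exact Nat.hyperfilter_le_atTop this

theorem sat_seq (M : ℕ → Model) (a₀ : ∀ n, (M n).U) (D : ℕ → ∀ n, (M n).U → Prop)
    (h : ∀ K, ∀ᶠ n in (uf : Filter ℕ), ∃ u, ∀ k < K, D k n u) :
    ∃ u : ∀ n, (M n).U, ∀ k, ∀ᶠ n in (uf : Filter ℕ), D k n (u n) := by
  classical
  have h0 : ∀ n, ∃ u, ∀ k < Nat.findGreatest (fun K => ∃ u, ∀ k < K, D k n u) n, D k n u := by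
    intro n
    exact Nat.findGreatest_spec (P := fun K => ∃ u, ∀ k < K, D k n u) (Nat.zero_le n)
      ⟨a₀ n, by simp⟩
  choose u hu using h0
  refine ⟨u, fun k => ?_⟩
  filter_upwards [h (k + 1), uf_ge (k + 1)] with n hn hk
  exact hu n k (Nat.le_findGreatest (P := fun K => ∃ u, ∀ k < K, D k n u) hk hn)

/-! Countability of modal formulas. -/

def enc : MForm → ℕ
  | .bot => Nat.pair 0 0
  | .prop n => Nat.pair 1 n
  | .conj I J => Nat.pair 2 (Nat.pair (enc I) (enc J))
  | .disj I J => Nat.pair 3 (Nat.pair (enc I) (enc J))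
  | .impl I J => Nat.pair 4 (Nat.pair (enc I) (enc J))
  | .box I => Nat.pair 5 (enc I)
  | .diam I => Nat.pair 6 (enc I)

theorem enc_inj : ∀ I J, enc I = enc J → I = J := by
  intro I
  induction I with
  | bot => intro J h; cases J <;> simp_all [enc, Nat.pair_eq_pair]
  | prop n => intro J h; cases J <;> simp_all [enc, Nat.pair_eq_pair]
  | conj I₁ I₂ h₁ h₂ =>
    intro J h; cases J <;> simp [enc, Nat.pair_eq_pair] at h ⊢
    exact ⟨h₁ _ h.1, h₂ _ h.2⟩
  | disj I₁ I₂ h₁ h₂ =>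
    intro J h; cases J <;> simp [enc, Nat.pair_eq_pair] at h ⊢
    exact ⟨h₁ _ h.1, h₂ _ h.2⟩
  | impl I₁ I₂ h₁ h₂ =>
    intro J h; cases J <;> simp [enc, Nat.pair_eq_pair] at h ⊢
    exact ⟨h₁ _ h.1, h₂ _ h.2⟩
  | box I₁ h₁ =>
    intro J h; cases J <;> simp [enc, Nat.pair_eq_pair] at h ⊢
    exact h₁ _ h
  | diam I₁ h₁ =>
    intro J h; cases J <;> simp [enc, Nat.pair_eq_pair] at h ⊢
    exact h₁ _ h

theorem exists_enum : ∃ e : ℕ → MForm, Function.Surjective e := by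
  have : Countable MForm := Function.Injective.countable (f := enc) (fun I J h => enc_inj I J h)
  have : Nonempty MForm := ⟨.bot⟩
  exact exists_surjective_nat MForm

theorem ultra_sat (M : ℕ → Model) (s : RelSym) (a : (ultra M).U) (T F : Set MForm)
    (h : ∀ L : List MForm, ∃ c, (ultra M).relOf s a c ∧
      ∀ I ∈ L, (I ∈ T → MSat (ultra M) I c) ∧ (I ∈ F → ¬ MSat (ultra M) I c)) :
    ∃ c, (ultra M).relOf s a c ∧
      ∀ I, (I ∈ T → MSat (ultra M) I c) ∧ (I ∈ F → ¬ MSat (ultra M) I c) := by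
  obtain ⟨e, he⟩ := exists_enum
  obtain ⟨c, hc⟩ := sat_seq M a (fun k n u => (M n).relOf s (a n) u ∧
    ((e k ∈ T → MSat (M n) (e k) u) ∧ (e k ∈ F → ¬ MSat (M n) (e k) u))) (by
      intro K
      obtain ⟨c, hr, hc⟩ := h ((List.range K).map e)
      rw [ultra_relOf] at hr
      have : ∀ᶠ n in (uf : Filter ℕ), ∀ k ∈ Finset.range K,
          (e k ∈ T → MSat (M n) (e k) (c n)) ∧ (e k ∈ F → ¬ MSat (M n) (e k) (c n)) := by
        rw [Filter.eventually_all_finset]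
        intro k hk
        obtain ⟨h1, h2⟩ := hc (e k) (List.mem_map_of_mem (by simpa using hk))
        rw [los_M] at h1 h2
        rw [← Ultrafilter.eventually_not] at h2
        refine Filter.Eventually.and ?_ ?_
        · by_cases hT : e k ∈ T
          · exact (h1 hT).mono fun _ hn _ => hn
          · exact Filter.Eventually.of_forall fun _ hn => absurd hn hT
        · by_cases hF : e k ∈ F
          · exact (h2 hF).mono fun _ hn _ => hn
          · exact Filter.Eventually.of_forall fun _ hn => absurd hn hF
      filter_upwards [hr, this] with n hn1 hn2
      exact ⟨c n, fun k hk => ⟨hn1, hn2 k (Finset.mem_range.2 hk)⟩⟩)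
  refine ⟨c, (ultra_relOf M s a c).2 ((hc 0).mono fun n hn => hn.1), fun I => ?_⟩
  obtain ⟨k, rfl⟩ := he I
  constructor
  · intro hT
    rw [los_M]
    exact (hc k).mono fun n hn => hn.2.1 hT
  · intro hF
    rw [los_M, ← Ultrafilter.eventually_not]
    exact (hc k).mono fun n hn => hn.2.2 hF

/-! Finite conjunctions and disjunctions. -/

def bigC : List MForm → MForm
  | [] => .impl .bot .bot
  | I :: L => .conj I (bigC L)

def bigD : List MForm → MForm
  | [] => .bot
  | I :: L => .disj I (bigD L)

theorem msat_bigC (M : Model) (L : List MForm) (a : M.U) :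
    MSat M (bigC L) a ↔ ∀ I ∈ L, MSat M I a := by
  induction L with
  | nil => simp [bigC, MSat]
  | cons I L ih => simp [bigC, MSat, ih]

theorem msat_bigD (M : Model) (L : List MForm) (a : M.U) :
    MSat M (bigD L) a ↔ ∃ I ∈ L, MSat M I a := by
  induction L with
  | nil => simp [bigD, MSat]
  | cons I L ih => simp [bigD, MSat, ih]

/-- Inclusion of modal types. -/
def Inc (M N : Model) (a : M.U) (b : N.U) : Prop := ∀ I, MSat M I a → MSat N I b

theorem inc_base (M N : Model) (Θ : Set ℕ) : BaseCondE M N Θ (Inc M N) :=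
  fun _ _ h n _ hn => h (.prop n) hn

theorem inc_step (M : ℕ → Model) (N : Model) :
    StepCondE (ultra M) N (Inc (ultra M) N) (Inc N (ultra M)) := by
  classical
  intro a b d hab hbd
  obtain ⟨c, hc, hI⟩ := ultra_sat M .r a {I | MSat N I d} {I | ¬ MSat N I d} (by
    intro L
    by_contra hcon
    have h1 : MSat (ultra M) (.impl (bigC (L.filter fun I => MSat N I d))
        (bigD (L.filter fun I => ¬ MSat N I d))) a := by
      intro c hac hC
      by_contra hD
      refine hcon ⟨c, hac, fun I hI => ⟨fun hT => ?_, fun hF hs => hD ?_⟩⟩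
      · exact (msat_bigC _ _ _).1 hC I (by simp only [List.mem_filter]; exact ⟨hI, by simpa using hT⟩)
      · exact (msat_bigD _ _ _).2 ⟨I, by simp only [List.mem_filter]; exact ⟨hI, by simpa using hF⟩, hs⟩
    have h2 := hab _ h1 d hbd ((msat_bigC _ _ _).2 (by simp))
    rw [msat_bigD] at h2
    obtain ⟨I, hI, hd⟩ := h2
    simp only [List.mem_filter, decide_eq_true_eq] at hI
    exact hI.2 hd)
  refine ⟨c, hc, fun I h => ?_, fun I h => (hI I).1 h⟩
  by_contra hn
  exact (hI I).2 hn h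

theorem inc_box (M : ℕ → Model) (N : Model) : Box1CondE (ultra M) N (Inc (ultra M) N) := by
  classical
  intro a b d hab hbd
  obtain ⟨c, hc, hI⟩ := ultra_sat M .box a ∅ {I | ¬ MSat N I d} (by
    intro L
    by_contra hcon
    have h1 : MSat (ultra M) (.box (bigD (L.filter fun I => ¬ MSat N I d))) a := by
      intro c hac
      by_contra hD
      refine hcon ⟨c, hac, fun I hI => ⟨fun hT => hT.elim, fun hF hs => hD ?_⟩⟩
      exact (msat_bigD _ _ _).2 ⟨I, by simp only [List.mem_filter]; exact ⟨hI, by simpa using hF⟩, hs⟩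
    have h2 := hab _ h1 d hbd
    rw [msat_bigD] at h2
    obtain ⟨I, hI, hd⟩ := h2
    simp only [List.mem_filter, decide_eq_true_eq] at hI
    exact hI.2 hd)
  refine ⟨c, hc, fun I h => ?_⟩
  by_contra hn
  exact (hI I).2 hn h

theorem inc_diam (M : Model) (N : ℕ → Model) : Diam1CondE M (ultra N) (Inc M (ultra N)) := by
  classical
  intro a c b hab hac
  obtain ⟨d, hd, hI⟩ := ultra_sat N .diam b {I | MSat M I c} ∅ (by
    intro L
    have h1 : MSat M (.diam (bigC (L.filter fun I => MSat M I c))) a :=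
      ⟨c, hac, (msat_bigC _ _ _).2 (by simp)⟩
    obtain ⟨d, hd, hC⟩ := hab _ h1
    refine ⟨d, hd, fun I hI => ⟨fun hT => ?_, fun hF => hF.elim⟩⟩
    exact (msat_bigC _ _ _).1 hC I (by simp only [List.mem_filter]; exact ⟨hI, by simpa using hT⟩))
  exact ⟨d, hd, fun I h => (hI I).1 h⟩

theorem approx (x : ℕ) (φ : FOForm) (hfv : φ.freeVars ⊆ {x})
    (hno : ¬ ∃ I : MForm, Equiv φ (ST true true I x)) (L : List MForm) :
    ∃ (M N : Model) (a : M.U) (b : N.U), Sat M φ (fun _ => a) ∧ ¬ Sat N φ (fun _ => b) ∧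
      ∀ I ∈ L, MSat M I a → MSat N I b := by
  classical
  by_contra hcon
  apply hno
  let real : List MForm → Prop := fun S =>
    ∃ (M : Model) (a : M.U), Sat M φ (fun _ => a) ∧ S = L.filter (fun I => MSat M I a)
  have hcg : ∀ (M : Model) (α : ℕ → M.U), Sat M φ α ↔ Sat M φ (fun _ => α x) := by
    intro M α
    refine sat_congr M φ _ _ fun v hv => ?_
    have : v = x := by simpa using hfv hv
    rw [this]
  refine ⟨bigD ((L.sublists.filter fun S => real S).map bigC), fun N α => ?_⟩
  rw [sat_ST, msat_bigD, hcg]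
  constructor
  · intro h
    refine ⟨bigC (L.filter fun I => MSat N I (α x)), List.mem_map_of_mem ?_, ?_⟩
    · rw [List.mem_filter, List.mem_sublists]
      exact ⟨List.filter_sublist, by simpa using (⟨N, α x, h, rfl⟩ : real _)⟩
    · exact (msat_bigC _ _ _).2 (by simp)
  · rintro ⟨I, hI, hs⟩
    rw [List.mem_map] at hI
    obtain ⟨S, hS, rfl⟩ := hI
    rw [List.mem_filter] at hS
    obtain ⟨M, a, hM, rfl⟩ : real S := by simpa using hS.2
    by_contra hN
    refine hcon ⟨M, N, a, α x, hM, hN, fun I hI hIa => ?_⟩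
    exact (msat_bigC _ _ _).1 hs I (by simp [hI, hIa])

theorem backward_dir (x : ℕ) (φ : FOForm) (hfv : φ.freeVars ⊆ {x})
    (hinv : InvariantD1 true x φ) : ∃ I : MForm, Equiv φ (ST true true I x) := by
  by_contra hno
  obtain ⟨e, he⟩ := exists_enum
  have := fun n : ℕ => approx x φ hfv hno ((List.range n).map e)
  choose M N a b hM hN hL using this
  have hinc : Inc (ultra M) (ultra N) a b := by
    intro I hI
    obtain ⟨k, rfl⟩ := he I
    rw [los_M] at hI ⊢
    filter_upwards [hI, uf_ge (k + 1)] with n hn hk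
    exact hL n (e k) (List.mem_map_of_mem (List.mem_range.2 hk)) hn
  have h1 : Sat (ultra M) φ (fun _ => a) := (los M φ _).2 (Filter.Eventually.of_forall hM)
  have h2 : ¬ Sat (ultra N) φ (fun _ => b) := by
    rw [los, ← Ultrafilter.eventually_not]
    exact Filter.Eventually.of_forall hN
  refine h2 (hinv Set.univ (Set.subset_univ _) (ultra M) (ultra N) a b
    (Inc (ultra M) (ultra N)) (Inc (ultra N) (ultra M)) ?_ a b hinc
    ((satAt_iff _ _ _ _ hfv _ rfl).2 h1) _ rfl)
  exact ⟨hinc, inc_base _ _ _, inc_base _ _ _, inc_step M _, inc_step N _,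
    ⟨inc_box M _, inc_box N _⟩, inc_diam _ N, inc_diam _ M⟩

/-- **Theorem 2, case (i,j) = (1,1).**  φ(x) is logically equivalent to the
(1,1)-standard x-translation of a modal intuitionistic formula iff φ(x) is
invariant with respect to (1,1)-modal asimulations. -/
theorem statement_6 (x : ℕ) (φ : FOForm) (hfv : φ.freeVars ⊆ {x}) :
    (∃ I : MForm, Equiv φ (ST true true I x)) ↔ InvariantD1 true x φ := by
  exact ⟨fun ⟨I, hI⟩ => forward_dir x φ I hI, backward_dir x φ hfv⟩

end ModalIntAsim
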